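/- Krivine's storage theorem: if ⊢_AF2 T : ∀x{N^g[x] → ¬¬N[x]}, then T is a storage operator for Church integers, i.e. for every n ∈ ℕ there is a λ-term τₙ ≃β n̲ such that for every θₙ ≃β n̲ there is a substitution σ with (T)θₙ f ≻ (f)σ(τₙ) (f a fresh variable). -/

import Mathlib

/- Pure untyped λ-calculus with de Bruijn indices. -/

inductive Lam : Type
  | var : ℕ → Lam
  | app : Lam → Lam → Lam
  | abs : Lam → Lam
  deriving DecidableEq

namespace Lam

/-- Renaming of free variables. -/
def rename (ρ : ℕ → ℕ) : Lam → Lam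
  | var i => var (ρ i)
  | app u v => app (u.rename ρ) (v.rename ρ)
  | abs u => abs (u.rename (fun i => match i with | 0 => 0 | j+1 => ρ j + 1))

/-- Lifting of a simultaneous substitution under a binder. -/
def liftSub (σ : ℕ → Lam) : ℕ → Lam
  | 0 => var 0
  | i+1 => (σ i).rename (· + 1)

/-- Simultaneous (capture-avoiding) substitution of the free variables. -/
def subst (σ : ℕ → Lam) : Lam → Lam
  | var i => σ i
  | app u v => app (u.subst σ) (v.subst σ)
  | abs u => abs (u.subst (liftSub σ))

/-- `u.subst0 v` is `u[v/x]` for the first variable. -/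
def subst0 (u v : Lam) : Lam :=
  u.subst (fun i => match i with | 0 => v | j+1 => var j)

/-- One step of β-reduction (anywhere in the term). -/
inductive Beta : Lam → Lam → Prop
  | beta (u v : Lam) : Beta (app (abs u) v) (u.subst0 v)
  | appL {u u'} (v) : Beta u u' → Beta (app u v) (app u' v)
  | appR (u) {v v'} : Beta v v' → Beta (app u v) (app u v')
  | abs {u u'} : Beta u u' → Beta (abs u) (abs u')

/-- β-equivalence `≃β`. -/
def BetaEq : Lam → Lam → Prop := Relation.EqvGen Beta

/-- A term is normal if it has no β-redex. -/
def Normal (t : Lam) : Prop := ∀ u, ¬ Beta t u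

def IsAbs : Lam → Prop
  | abs _ => True
  | _ => False

/-- One step of head reduction: reduction of the head redex. -/
inductive HeadStep : Lam → Lam → Prop
  | beta (u v) : HeadStep (app (abs u) v) (u.subst0 v)
  | appL {u u'} (v) : ¬ u.IsAbs → HeadStep u u' → HeadStep (app u v) (app u' v)
  | abs {u u'} : HeadStep u u' → HeadStep (abs u) (abs u')

/-- `HeadRedN n u v` : `u` head-reduces to `v` in exactly `n` steps (`u ≻ v` with `n(u,v) = n`). -/
inductive HeadRedN : ℕ → Lam → Lam → Prop
  | refl (u) : HeadRedN 0 u u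
  | step {n u v w} : HeadStep u v → HeadRedN n v w → HeadRedN (n+1) u w

/-- `u ≻ v` : `v` is obtained from `u` by some head reductions. -/
def HeadRed (u v : Lam) : Prop := ∃ n, HeadRedN n u v

/-- Head normal form. -/
def HeadNF (t : Lam) : Prop := ∀ u, ¬ HeadStep t u

def ClosedUnder : ℕ → Lam → Prop
  | k, var i => i < k
  | k, app u v => ClosedUnder k u ∧ ClosedUnder k v
  | k, abs u => ClosedUnder (k+1) u

/-- Closed λ-term. -/
def Closed (t : Lam) : Prop := ClosedUnder 0 t

/-- `(f)ⁿx` : `iterApp f n x = (f)(f)…(f)x`. -/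
def iterApp (f : Lam) : ℕ → Lam → Lam
  | 0, x => x
  | n+1, x => app f (iterApp f n x)

/-- The Church integer `n̲ = λxλf(f)ⁿx`. -/
def church (n : ℕ) : Lam := abs (abs (iterApp (var 0) n (var 1)))

/-- `(t)w₁…wₖ`. -/
def appList (t : Lam) (ws : List Lam) : Lam := ws.foldl app t

/-- `T` is a storage operator for the closed normal term `t` :
there is `τ ≃β t` such that for every `θ ≃β t` there is a substitution `σ`
(not touching the fresh variable `f`, represented by the de Bruijn index `0`)
with `(T)θf ≻ (f)σ(τ)`. -/
def IsStorageFor (T t : Lam) : Prop :=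
  Closed T ∧ ∃ τ, BetaEq τ t ∧ ∀ θ, BetaEq θ t →
    ∃ σ : ℕ → Lam, σ 0 = var 0 ∧
      HeadRed (app (app T θ) (var 0)) (app (var 0) (τ.subst σ))

end Lam

/- Second order predicate logic : the types of the AF2 type system. -/

/-- A first order language: function symbols with arities, and predicate symbols. -/
structure Sig where
  Fn : Type
  arFn : Fn → ℕ
  Pr : Type

/-- First order terms over `S` (de Bruijn indices for first order variables). -/
inductive FOTerm (S : Sig) : Type
  | var : ℕ → FOTerm S
  | fn : (f : S.Fn) → (Fin (S.arFn f) → FOTerm S) → FOTerm S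

namespace FOTerm

variable {S : Sig}

def rename (ρ : ℕ → ℕ) : FOTerm S → FOTerm S
  | var i => var (ρ i)
  | fn f ts => fn f (fun i => (ts i).rename ρ)

def liftSub (σ : ℕ → FOTerm S) : ℕ → FOTerm S
  | 0 => var 0
  | i+1 => (σ i).rename (· + 1)

/-- Simultaneous substitution on first order terms. -/
def subst (σ : ℕ → FOTerm S) : FOTerm S → FOTerm S
  | var i => σ i
  | fn f ts => fn f (fun i => (ts i).subst σ)

end FOTerm

/-- Formulas of second order predicate logic over `S` : `⊥`, atomic formulas
`P(t₁,…,tₙ)` (predicate symbol) and `X(t₁,…,tₙ)` (predicate variable, de Bruijn),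
implication, first order and second order universal quantification. -/
inductive Form (S : Sig) : Type
  | bot : Form S
  | pr : S.Pr → List (FOTerm S) → Form S
  | pvar : ℕ → List (FOTerm S) → Form S
  | arr : Form S → Form S → Form S
  | fall : Form S → Form S
  | pall : Form S → Form S

namespace Form

variable {S : Sig}

/-- `¬A = A → ⊥`. -/
def neg (A : Form S) : Form S := arr A bot

/-- Substitution of first order terms for the first order variables of a formula. -/
def substFO (σ : ℕ → FOTerm S) : Form S → Form S
  | bot => bot
  | pr P ts => pr P (ts.map (FOTerm.subst σ))
  | pvar X ts => pvar X (ts.map (FOTerm.subst σ))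
  | arr A B => arr (A.substFO σ) (B.substFO σ)
  | fall A => fall (A.substFO (FOTerm.liftSub σ))
  | pall A => pall (A.substFO σ)

/-- `A[u/x]` for the first first-order variable. -/
def substFO0 (A : Form S) (u : FOTerm S) : Form S :=
  A.substFO (fun i => match i with | 0 => u | j+1 => FOTerm.var j)

/-- Lifting of the free first order variables (used for the rule (4)). -/
def shiftFO (A : Form S) : Form S := A.substFO (fun i => FOTerm.var (i+1))

/-- Renaming of the free predicate variables. -/
def rename2 (ρ : ℕ → ℕ) : Form S → Form S
  | bot => bot
  | pr P ts => pr P ts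
  | pvar X ts => pvar (ρ X) ts
  | arr A B => arr (A.rename2 ρ) (B.rename2 ρ)
  | fall A => fall (A.rename2 ρ)
  | pall A => pall (A.rename2 (fun i => match i with | 0 => 0 | j+1 => ρ j + 1))

/-- `inst2 G d e A` : substitution `A[G/X]` of the formula `G` (whose first order
variables `0,…,k-1` are the parameters of the predicate variable `X`) for the
predicate variable `X` of de Bruijn index `e`, where `d` first order binders have
been crossed. Each atomic subformula `X(t₁,…,tₖ)` is replaced by `G[t₁/x₁,…,tₖ/xₖ]`. -/
def inst2 (G : Form S) : ℕ → ℕ → Form S → Form S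
  | _, _, bot => bot
  | _, _, pr P ts => pr P ts
  | d, e, pvar X ts =>
      if X = e then
        (G.rename2 (· + e)).substFO (fun i =>
          if h : i < ts.length then ts.get ⟨i, h⟩ else FOTerm.var (i - ts.length + d))
      else pvar (if e < X then X - 1 else X) ts
  | d, e, arr A B => arr (inst2 G d e A) (inst2 G d e B)
  | d, e, fall A => fall (inst2 G (d+1) e A)
  | d, e, pall A => pall (inst2 G d (e+1) A)

/-- `A[G/X]` for the first predicate variable. -/
def inst2_0 (A G : Form S) : Form S := inst2 G 0 0 A

end Form

/-- Axioms of the equational theory: substitution instances of the equations of `E`. -/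
def EqAx {S : Sig} (E : Set (FOTerm S × FOTerm S)) (u v : FOTerm S) : Prop :=
  ∃ p ∈ E, ∃ σ : ℕ → FOTerm S, u = p.1.subst σ ∧ v = p.2.subst σ

/-- `u ≈ v` : the equivalence relation generated by the substitution instances
of the equations of `E`. -/
def EqE {S : Sig} (E : Set (FOTerm S × FOTerm S)) : FOTerm S → FOTerm S → Prop :=
  Relation.EqvGen (EqAx E)

/-- The AF2 type system: `AF2 S E Γ t A` means `Γ ⊢_{AF2} t : A`
with respect to the set of equations `E` (de Bruijn presentation: the rules
(4) and (6) of ∀-introduction lift the context, which implements the side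
condition that the quantified variable does not occur free in `Γ`). -/
inductive AF2 (S : Sig) (E : Set (FOTerm S × FOTerm S)) :
    List (Form S) → Lam → Form S → Prop
  | var {Γ : List (Form S)} {i : ℕ} {A : Form S} :
      Γ[i]? = some A → AF2 S E Γ (.var i) A
  | absI {Γ : List (Form S)} {A B : Form S} {t : Lam} :
      AF2 S E (A :: Γ) t B → AF2 S E Γ (.abs t) (.arr A B)
  | appE {Γ : List (Form S)} {A B : Form S} {u v : Lam} :
      AF2 S E Γ u (.arr A B) → AF2 S E Γ v A → AF2 S E Γ (.app u v) B
  | fallI {Γ : List (Form S)} {t : Lam} {A : Form S} :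
      AF2 S E (Γ.map Form.shiftFO) t A → AF2 S E Γ t (.fall A)
  | fallE {Γ : List (Form S)} {t : Lam} {A : Form S} (u : FOTerm S) :
      AF2 S E Γ t (.fall A) → AF2 S E Γ t (A.substFO0 u)
  | pallI {Γ : List (Form S)} {t : Lam} {A : Form S} :
      AF2 S E (Γ.map (Form.rename2 (· + 1))) t A → AF2 S E Γ t (.pall A)
  | pallE {Γ : List (Form S)} {t : Lam} {A : Form S} (G : Form S) :
      AF2 S E Γ t (.pall A) → AF2 S E Γ t (A.inst2_0 G)
  | eqE {Γ : List (Form S)} {t : Lam} {A : Form S} {u v : FOTerm S} :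
      AF2 S E Γ t (A.substFO0 u) → EqE E u v → AF2 S E Γ t (A.substFO0 v)

/- The language of arithmetic: a constant 0 and a unary function symbol s. -/

inductive NatFn : Type
  | zero : NatFn
  | succ : NatFn

/-- The signature with a constant symbol `0` and a unary function symbol `s`. -/
def NatSig : Sig where
  Fn := NatFn
  arFn := fun f => match f with | .zero => 0 | .succ => 1
  Pr := Empty

/-- The first order term `0`. -/
def zeroT : FOTerm NatSig := .fn NatFn.zero (fun i => i.elim0)

/-- The first order term `s(u)`. -/
def succT (u : FOTerm NatSig) : FOTerm NatSig := .fn NatFn.succ (fun _ => u)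

/-- The first order term `sⁿ(0)`. -/
def numT : ℕ → FOTerm NatSig
  | 0 => zeroT
  | n+1 => succT (numT n)

/-- The type of integers `N[u] = ∀X{X(0), ∀y(X(y) → X(sy)) → X(u)}`. -/
def NForm (u : FOTerm NatSig) : Form NatSig :=
  .pall (.arr (.pvar 0 [zeroT])
    (.arr (.fall (.arr (.pvar 0 [FOTerm.var 0]) (.pvar 0 [succT (FOTerm.var 0)])))
      (.pvar 0 [u])))

/-- A set of equations is adequate with the type of integers iff
`s(a) ≉ 0` and `s(a) ≈ s(b)` implies `a ≈ b`. -/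
def Adequate (E : Set (FOTerm NatSig × FOTerm NatSig)) : Prop :=
  (∀ a, ¬ EqE E (succT a) zeroT) ∧
  (∀ a b, EqE E (succT a) (succT b) → EqE E a b)

/-- The Gödel translation `F^g`, obtained by putting `¬` in front of
each atomic subformula of `F`. -/
def Form.godel {S : Sig} : Form S → Form S
  | .bot => .neg .bot
  | .pr P ts => .neg (.pr P ts)
  | .pvar X ts => .neg (.pvar X ts)
  | .arr A B => .arr A.godel B.godel
  | .fall A => .fall A.godel
  | .pall A => .pall A.godel

/-- The type `∀x{N^g[x] → ¬¬N[x]}` of storage operators. -/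
def storType : Form NatSig :=
  .fall (.arr (NForm (FOTerm.var 0)).godel (.neg (.neg (NForm (FOTerm.var 0)))))

/-!
Interpret formulas by sets of terms saturated under weak head expansion. Let `f` and `ν` be two
variables and read `ν` as a generic integer: an abstract machine runs `(T)νf` by weak head
reduction, and when `(ν)ab` reaches head position it is frozen into a new variable, which stands
for the integer `n` with base `a` and step `b` and later unfolds one successor at a time. Let `⊥`
be the set of terms that the machine brings to some `(f)τ` with `τ` reducing to `n̲`. Then `f`
realizes `¬N[n]`, since a realizer of `N[n]` always reduces to `n̲`, and `ν` realizes `N^g[n]`,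
since the machine performs the recursion on `n`. Soundness of the typing rules puts `(T)νf` in `⊥`,
which yields a `τ` chosen without reference to any `θ`.

Now let `θ ≃β n̲`. By confluence and standardization `(θ)xf` unfolds by weak head reduction as
`tₙ`, with `tₘ₊₁ ≻ (f)tₘ` and `t₀ ≻ x`. Replacing `ν` by `θ` and each frozen variable by the
corresponding instance of `tₘ` turns every machine step into a weak head reduction, hence
`(T)θf ≻ (f)σ(τ)`.
-/

open Relation

/-- The environment `a, ρ 0, ρ 1, …` obtained from `ρ` by entering one binder. -/
def scons {α : Type*} (a : α) (ρ : ℕ → α) : ℕ → α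
  | 0 => a
  | i + 1 => ρ i

theorem exists_recursive_extend {α β : Type*} {K : α → ℕ} (hK : Function.Injective K)
    {F : α → (ℕ → β) → β} (hF : ∀ x σ σ', (∀ i < K x, σ i = σ' i) → F x σ = F x σ')
    (σ₀ : ℕ → β) :
    ∃ σ : ℕ → β, (∀ x, σ (K x) = F x σ) ∧ ∀ i, (¬ ∃ x, K x = i) → σ i = σ₀ i := by
  let next (i : ℕ) (prev : ∀ j < i, β) : β :=
    Function.extend K (fun x => F x fun j => if hj : j < i then prev j hj else σ₀ j) σ₀ i
  let σ : ℕ → β := Nat.strongRec next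
  have hσ (i : ℕ) : σ i = next i fun j _ => σ j := Nat.strongRec_eq ..
  refine ⟨σ, fun x => ?_, fun i hi => (hσ i).trans (Function.extend_apply' _ _ _ hi)⟩
  rw [hσ]
  exact (hK.extend_apply _ _ _).trans (hF x _ _ fun i hi => dif_pos hi)

namespace Lam

/-! ### Substitution -/

/-- Lifting of a renaming under a binder. -/
def liftRen (ρ : ℕ → ℕ) : ℕ → ℕ := scons 0 fun i => ρ i + 1

theorem rename_abs (ρ : ℕ → ℕ) (u : Lam) : (abs u).rename ρ = abs (u.rename (liftRen ρ)) := rfl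

theorem subst0_eq_subst (u v : Lam) : u.subst0 v = u.subst (scons v var) := rfl

theorem rename_eq_subst (t : Lam) (ρ : ℕ → ℕ) : t.rename ρ = t.subst fun i => var (ρ i) := by
  induction t generalizing ρ with
  | var i => rfl
  | app u v hu hv => simp only [rename, subst, hu, hv]
  | abs u hu =>
    rw [rename_abs, hu, subst]
    congr 2
    exact funext (Nat.rec rfl fun _ _ => rfl)

theorem subst_rename (t : Lam) (ρ : ℕ → ℕ) (σ : ℕ → Lam) :
    (t.rename ρ).subst σ = t.subst fun i => σ (ρ i) := by
  induction t generalizing ρ σ with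
  | var i => rfl
  | app u v hu hv => simp only [rename, subst, hu, hv]
  | abs u hu =>
    rw [rename_abs, subst, hu, subst]
    congr 2
    exact funext (Nat.rec rfl fun _ _ => rfl)

theorem rename_subst (t : Lam) (σ : ℕ → Lam) (ρ : ℕ → ℕ) :
    (t.subst σ).rename ρ = t.subst fun i => (σ i).rename ρ := by
  induction t generalizing ρ σ with
  | var i => rfl
  | app u v hu hv => simp only [rename, subst, hu, hv]
  | abs u hu =>
    rw [subst, rename_abs, hu, subst]
    congr 2
    refine funext (Nat.rec rfl fun i _ => ?_)
    simp only [liftSub]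
    rw [rename_eq_subst _ (liftRen ρ), subst_rename, rename_eq_subst _ (· + 1), subst_rename]
    rfl

theorem subst_subst (t : Lam) (σ σ' : ℕ → Lam) :
    (t.subst σ).subst σ' = t.subst fun i => (σ i).subst σ' := by
  induction t generalizing σ σ' with
  | var i => rfl
  | app u v hu hv => simp only [subst, hu, hv]
  | abs u hu =>
    simp only [subst, hu]
    congr 2
    refine funext (Nat.rec rfl fun i _ => ?_)
    simp only [liftSub]
    rw [subst_rename, rename_subst]
    rfl

theorem liftSub_var : liftSub var = var := funext (Nat.rec rfl fun _ _ => rfl)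

theorem subst_var (t : Lam) : t.subst var = t := by
  induction t with
  | var i => rfl
  | app u v hu hv => rw [subst, hu, hv]
  | abs u hu => rw [subst, liftSub_var, hu]

theorem subst0_subst_liftSub (u v : Lam) (σ : ℕ → Lam) :
    (u.subst (liftSub σ)).subst0 v = u.subst (scons v σ) := by
  rw [subst0_eq_subst, subst_subst]
  congr 1
  refine funext (Nat.rec rfl fun i _ => ?_)
  rw [liftSub, subst_rename]
  exact subst_var _

theorem subst_subst0 (u v : Lam) (σ : ℕ → Lam) :
    (u.subst0 v).subst σ = (u.subst (liftSub σ)).subst0 (v.subst σ) := by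
  rw [subst0_subst_liftSub, subst0_eq_subst, subst_subst]
  congr 1
  exact funext (Nat.rec rfl fun _ _ => rfl)

theorem rename_subst0 (u v : Lam) (ρ : ℕ → ℕ) :
    (u.subst0 v).rename ρ = (u.rename (liftRen ρ)).subst0 (v.rename ρ) := by
  rw [subst0_eq_subst, subst0_eq_subst, rename_subst, subst_rename]
  congr 1
  exact funext (Nat.rec rfl fun _ _ => rfl)

theorem subst0_rename_liftRen_var_zero (u : Lam) :
    (u.rename (liftRen (· + 1))).subst0 (var 0) = u := by
  rw [subst0_eq_subst, subst_rename]
  convert subst_var u using 2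
  exact funext (Nat.rec rfl fun _ _ => rfl)

theorem ClosedUnder.subst_congr {k : ℕ} {t : Lam} (ht : ClosedUnder k t) {σ σ' : ℕ → Lam}
    (h : ∀ i < k, σ i = σ' i) : t.subst σ = t.subst σ' := by
  induction t generalizing k σ σ' with
  | var i => exact h i ht
  | app u v hu hv => rw [subst, subst, hu ht.1 h, hv ht.2 h]
  | abs u hu =>
    rw [subst, subst]
    congr 1
    refine hu ht fun i hi => ?_
    cases i with
    | zero => rfl
    | succ j => rw [liftSub, liftSub, h j (Nat.lt_of_succ_lt_succ hi)]

theorem Closed.subst_eq {t : Lam} (ht : Closed t) (σ : ℕ → Lam) : t.subst σ = t :=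
  (ClosedUnder.subst_congr ht fun _ hi => absurd hi (Nat.not_lt_zero _)).trans (subst_var t)

/-! ### Reductions -/

/-- Many-step β-reduction. -/
abbrev BetaRed : Lam → Lam → Prop := ReflTransGen Beta

/-- One step of weak head reduction. Unlike `HeadStep` it never goes under an abstraction, which
makes it stable under substitution and under application to an arbitrary argument. -/
inductive WeakStep : Lam → Lam → Prop
  | beta (u v : Lam) : WeakStep (app (abs u) v) (u.subst0 v)
  | appL {u u'} (v : Lam) : WeakStep u u' → WeakStep (app u v) (app u' v)

/-- Many-step weak head reduction. -/
abbrev WeakRed : Lam → Lam → Prop := ReflTransGen WeakStep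

protected theorem BetaRed.app {u u' v v' : Lam} (hu : BetaRed u u') (hv : BetaRed v v') :
    BetaRed (app u v) (app u' v') :=
  (hu.lift (fun t => Lam.app t v) fun _ _ => .appL v).trans
    (hv.lift (fun t => Lam.app u' t) fun _ _ => .appR u')

protected theorem BetaRed.abs {u u' : Lam} (hu : BetaRed u u') : BetaRed (abs u) (abs u') :=
  hu.lift Lam.abs fun _ _ => .abs

theorem Beta.subst {t t' : Lam} (h : Beta t t') (σ : ℕ → Lam) :
    Beta (t.subst σ) (t'.subst σ) := by
  induction h generalizing σ with
  | beta u v => rw [subst_subst0]; exact .beta _ _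
  | appL v _ ih => exact .appL _ (ih σ)
  | appR v _ ih => exact .appR _ (ih σ)
  | abs _ ih => exact .abs (ih _)

theorem WeakStep.to_beta {t t' : Lam} (h : WeakStep t t') : Beta t t' := by
  induction h with
  | beta u v => exact .beta u v
  | appL v _ ih => exact .appL v ih

theorem WeakStep.to_headStep {t t' : Lam} (h : WeakStep t t') : HeadStep t t' := by
  induction h with
  | beta u v => exact .beta u v
  | appL v h ih => exact .appL v (by cases h <;> exact id) ih

theorem WeakRed.to_headRed {t t' : Lam} (h : WeakRed t t') : HeadRed t t' := by
  induction h using ReflTransGen.head_induction_on with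
  | refl => exact ⟨0, .refl _⟩
  | head h _ ih =>
    obtain ⟨n, hn⟩ := ih
    exact ⟨n + 1, .step h.to_headStep hn⟩

theorem WeakStep.subst {t t' : Lam} (h : WeakStep t t') (σ : ℕ → Lam) :
    WeakStep (t.subst σ) (t'.subst σ) := by
  induction h with
  | beta u v => rw [subst_subst0]; exact .beta _ _
  | appL v _ ih => exact .appL _ ih

theorem WeakRed.subst {t t' : Lam} (h : WeakRed t t') (σ : ℕ → Lam) :
    WeakRed (t.subst σ) (t'.subst σ) :=
  h.lift (Lam.subst σ) fun _ _ h => h.subst σ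

theorem WeakRed.rename {t t' : Lam} (h : WeakRed t t') (ρ : ℕ → ℕ) :
    WeakRed (t.rename ρ) (t'.rename ρ) := by
  rw [rename_eq_subst, rename_eq_subst]
  exact h.subst _

theorem WeakRed.appL {t t' : Lam} (h : WeakRed t t') (v : Lam) : WeakRed (app t v) (app t' v) :=
  h.lift (fun t => app t v) fun _ _ => .appL v

theorem WeakRed.app_of_abs {t u : Lam} (h : WeakRed t (abs u)) (v : Lam) :
    WeakRed (app t v) (u.subst0 v) :=
  (h.appL v).tail (.beta u v)

/-! ### Confluence -/

/-- Parallel β-reduction, contracting any set of redexes of the source term at once. -/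
inductive Par : Lam → Lam → Prop
  | var (i : ℕ) : Par (var i) (var i)
  | app {u u' v v'} : Par u u' → Par v v' → Par (app u v) (app u' v')
  | abs {u u'} : Par u u' → Par (abs u) (abs u')
  | beta {u u' v v'} : Par u u' → Par v v' → Par (app (abs u) v) (u'.subst0 v')

theorem Par.refl (t : Lam) : Par t t := by
  induction t with
  | var i => exact .var i
  | app u v hu hv => exact .app hu hv
  | abs u hu => exact .abs hu

theorem Beta.to_par {t t' : Lam} (h : Beta t t') : Par t t' := by
  induction h with
  | beta u v => exact .beta (.refl _) (.refl _)
  | appL v _ ih => exact .app ih (.refl _)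
  | appR v _ ih => exact .app (.refl _) ih
  | abs _ ih => exact .abs ih

theorem Par.to_betaRed {t t' : Lam} (h : Par t t') : BetaRed t t' := by
  induction h with
  | var i => exact .refl
  | app _ _ hu hv => exact .app hu hv
  | abs _ hu => exact .abs hu
  | beta _ _ hu hv => exact (BetaRed.app hu.abs hv).tail (.beta _ _)

theorem reflTransGen_par : ReflTransGen Par = BetaRed :=
  le_antisymm (reflTransGen_closed fun _ _ => Par.to_betaRed)
    (ReflTransGen.mono fun _ _ => Beta.to_par)

theorem Par.rename {t t' : Lam} (h : Par t t') (ρ : ℕ → ℕ) : Par (t.rename ρ) (t'.rename ρ) := by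
  induction h generalizing ρ with
  | var i => exact .var _
  | app _ _ hu hv => exact .app (hu ρ) (hv ρ)
  | abs _ hu => exact .abs (hu _)
  | beta _ _ hu hv => rw [rename_subst0]; exact .beta (hu _) (hv _)

theorem Par.liftSub {σ σ' : ℕ → Lam} (h : ∀ i, Par (σ i) (σ' i)) :
    ∀ i, Par (liftSub σ i) (liftSub σ' i)
  | 0 => .refl _
  | i + 1 => (h i).rename _

theorem Par.subst {t t' : Lam} (h : Par t t') {σ σ' : ℕ → Lam} (hσ : ∀ i, Par (σ i) (σ' i)) :
    Par (t.subst σ) (t'.subst σ') := by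
  induction h generalizing σ σ' with
  | var i => exact hσ i
  | app _ _ hu hv => exact .app (hu hσ) (hv hσ)
  | abs _ hu => exact .abs (hu (liftSub hσ))
  | beta _ _ hu hv => rw [subst_subst0]; exact .beta (hu (liftSub hσ)) (hv hσ)

theorem Par.subst0 {u u' v v' : Lam} (hu : Par u u') (hv : Par v v') :
    Par (u.subst0 v) (u'.subst0 v') :=
  hu.subst (Nat.rec hv fun _ _ => .refl _)

/-- Complete development: contraction of all redexes of a term at once. -/
def development : Lam → Lam
  | var i => var i
  | abs u => abs (development u)
  | app (abs u) v => (development u).subst0 (development v)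
  | app (var i) v => app (var i) (development v)
  | app (app u u') v => app (development (app u u')) (development v)

theorem Par.to_development {t t' : Lam} (h : Par t t') : Par t' t.development := by
  induction h with
  | var i => exact .var i
  | abs _ hu => exact .abs hu
  | beta _ _ hu hv => exact hu.subst0 hv
  | @app u _ _ _ hu _ ihu ihv =>
    cases u with
    | var i => exact .app ihu ihv
    | app u u' => rw [development]; exact .app ihu ihv
    | abs u =>
      cases hu with
      | abs _ =>
        cases ihu with
        | abs ihu => exact .beta ihu ihv

theorem BetaEq.join {t u : Lam} (h : BetaEq t u) : Join BetaRed t u := by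
  have par_join : Equivalence (Join (ReflTransGen Par)) :=
    equivalence_join_reflTransGen fun t _ _ h h' =>
      ⟨t.development, .single h.to_development, .single h'.to_development⟩
  rw [reflTransGen_par] at par_join
  exact par_join.eqvGen_iff.1 (EqvGen.eqvGen_mono (fun _ u h => ⟨u, .single h, .refl⟩) _ _ h)

theorem BetaEq.betaRed_of_normal {t u : Lam} (h : BetaEq t u) (hu : Normal u) : BetaRed t u := by
  obtain ⟨v, htv, huv⟩ := h.join
  rwa [(reflTransGen_iff_eq hu).1 huv] at htv

theorem normal_iterApp_var (i j n : ℕ) : Normal (iterApp (var i) n (var j)) := by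
  induction n with
  | zero => rintro _ ⟨⟩
  | succ n ih =>
    intro _ h
    cases h with
    | appL _ h => cases h
    | appR _ h => exact ih _ h

theorem normal_church (n : ℕ) : Normal (church n) := by
  intro _ h
  cases h with
  | abs h =>
    cases h with
    | abs h => exact normal_iterApp_var 0 1 n _ h

/-! ### Standardization -/

/-- Standard β-reduction: weak head reduction to expose the outermost constructor, followed by
standard reductions of the immediate subterms. -/
inductive StdRed : Lam → Lam → Prop
  | var {t i} : WeakRed t (var i) → StdRed t (var i)
  | app {t u v u' v'} : WeakRed t (app u v) → StdRed u u' → StdRed v v' → StdRed t (app u' v')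
  | abs {t u u'} : WeakRed t (abs u) → StdRed u u' → StdRed t (abs u')

theorem StdRed.refl (t : Lam) : StdRed t t := by
  induction t with
  | var i => exact .var .refl
  | app u v hu hv => exact .app .refl hu hv
  | abs u hu => exact .abs .refl hu

theorem WeakRed.trans_stdRed {t u v : Lam} (h : WeakRed t u) (h' : StdRed u v) : StdRed t v := by
  cases h' with
  | var hu => exact .var (h.trans hu)
  | app hu h₁ h₂ => exact .app (h.trans hu) h₁ h₂
  | abs hu h₁ => exact .abs (h.trans hu) h₁

theorem StdRed.rename {t t' : Lam} (h : StdRed t t') (ρ : ℕ → ℕ) :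
    StdRed (t.rename ρ) (t'.rename ρ) := by
  induction h generalizing ρ with
  | var h => exact .var (h.rename ρ)
  | app h _ _ hu hv => exact .app (h.rename ρ) (hu ρ) (hv ρ)
  | abs h _ hu => exact .abs (h.rename ρ) (hu _)

theorem StdRed.liftSub {σ σ' : ℕ → Lam} (h : ∀ i, StdRed (σ i) (σ' i)) :
    ∀ i, StdRed (liftSub σ i) (liftSub σ' i)
  | 0 => .refl _
  | i + 1 => (h i).rename _

theorem StdRed.subst {t t' : Lam} (h : StdRed t t') {σ σ' : ℕ → Lam}
    (hσ : ∀ i, StdRed (σ i) (σ' i)) : StdRed (t.subst σ) (t'.subst σ') := by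
  induction h generalizing σ σ' with
  | var h => exact WeakRed.trans_stdRed (h.subst σ) (hσ _)
  | app h _ _ hu hv => exact .app (h.subst σ) (hu hσ) (hv hσ)
  | abs h _ hu => exact .abs (h.subst σ) (hu (liftSub hσ))

theorem StdRed.subst0 {u u' v v' : Lam} (hu : StdRed u u') (hv : StdRed v v') :
    StdRed (u.subst0 v) (u'.subst0 v') :=
  hu.subst (Nat.rec hv fun _ _ => .refl _)

theorem StdRed.tail {t u v : Lam} (h : StdRed t u) (huv : Beta u v) : StdRed t v := by
  induction huv generalizing t with
  | beta u v =>
    cases h with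
    | app ht hu hv =>
      cases hu with
      | abs hw hu => exact WeakRed.trans_stdRed (ht.trans (hw.app_of_abs _)) (hu.subst0 hv)
  | appL v _ ih =>
    cases h with
    | app ht hu hv => exact .app ht (ih hu) hv
  | appR u _ ih =>
    cases h with
    | app ht hu hv => exact .app ht hu (ih hv)
  | abs _ ih =>
    cases h with
    | abs ht hu => exact .abs ht (ih hu)

theorem BetaRed.to_stdRed {t u : Lam} (h : BetaRed t u) : StdRed t u := by
  induction h with
  | refl => exact .refl t
  | tail _ h ih => exact ih.tail h

/-! ### Terms equivalent to a Church integer -/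

theorem StdRed.exists_iterApp_unfolding {n : ℕ} {u : Lam}
    (h : StdRed u (iterApp (.var 0) n (.var 1))) :
    ∃ t : ℕ → Lam, t n = u ∧ WeakRed (t 0) (.var 1) ∧
      ∀ m < n, WeakRed (t (m + 1)) (.app (.var 0) (t m)) := by
  induction n generalizing u with
  | zero =>
    cases h with
    | var h => exact ⟨fun _ => u, rfl, h, fun m hm => absurd hm (Nat.not_lt_zero m)⟩
  | succ n ih =>
    cases h with
    | app hu hf hv =>
      cases hf with
      | var hf =>
        obtain ⟨t, rfl, hzero, hsucc⟩ := ih hv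
        refine ⟨Function.update t (n + 1) u, Function.update_self .., hzero, fun m hm => ?_⟩
        rw [Function.update_of_ne (by lia : m ≠ n + 1)]
        rcases Nat.lt_succ_iff_lt_or_eq.1 hm with hm | rfl
        · rw [Function.update_of_ne (by lia)]
          exact hsucc m hm
        · rw [Function.update_self]
          exact hu.trans (hf.appL _)

/-- `t 0, …, t n` are the successive stages, in the variables `x = var 1` and `f = var 0`, of the
weak head evaluation of `(θ)xf` for a term `θ` which behaves as the integer `n`. -/
structure IsUnfolding (θ : Lam) (n : ℕ) (t : ℕ → Lam) : Prop where
  app_app (a b : Lam) : WeakRed (app (app θ a) b) ((t n).subst (scons b (scons a var)))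
  zero : WeakRed (t 0) (var 1)
  succ (m : ℕ) (hm : m < n) : WeakRed (t (m + 1)) (app (var 0) (t m))

theorem BetaEq.exists_isUnfolding {θ : Lam} {n : ℕ} (h : BetaEq θ (church n)) :
    ∃ t, IsUnfolding θ n t := by
  cases (h.betaRed_of_normal (normal_church n)).to_stdRed with
  | @abs _ u _ hθ hu =>
    cases hu with
    | @abs _ w _ hu hw =>
      obtain ⟨t, rfl, hzero, hsucc⟩ := hw.exists_iterApp_unfolding
      refine ⟨t, fun a b => ?_, hzero, hsucc⟩
      have hθa : WeakRed (app θ a) (abs ((t n).subst (liftSub (scons a var)))) :=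
        (hθ.app_of_abs a).trans (hu.subst (scons a var))
      rw [← subst0_subst_liftSub]
      exact hθa.app_of_abs b

theorem Beta.exists_of_rename {t s : Lam} {ρ : ℕ → ℕ} (h : Beta (t.rename ρ) s) :
    ∃ t', s = t'.rename ρ ∧ Beta t t' := by
  generalize hr : t.rename ρ = r at h
  induction h generalizing t ρ with
  | beta u v =>
    rcases t with _ | ⟨_ | _ | u, v⟩ | _ <;> cases hr
    exact ⟨u.subst0 v, (rename_subst0 u v ρ).symm, .beta u v⟩
  | appL v _ ih =>
    rcases t with _ | ⟨u, v⟩ | _ <;> cases hr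
    obtain ⟨u', rfl, hu⟩ := ih rfl
    exact ⟨app u' v, rfl, .appL v hu⟩
  | appR u _ ih =>
    rcases t with _ | ⟨u, v⟩ | _ <;> cases hr
    obtain ⟨v', rfl, hv⟩ := ih rfl
    exact ⟨app u v', rfl, .appR u hv⟩
  | abs _ ih =>
    rcases t with _ | _ | u <;> cases hr
    obtain ⟨u', rfl, hu⟩ := ih rfl
    exact ⟨.abs u', rfl, .abs hu⟩

theorem BetaRed.abs_of_app_var {t v : Lam} (h : BetaRed (app (t.rename (· + 1)) (var 0)) v)
    (hv : ∀ t' : Lam, v ≠ app (t'.rename (· + 1)) (var 0)) : BetaRed t (abs v) := by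
  generalize hs : app (t.rename (· + 1)) (var 0) = s at h
  induction h using ReflTransGen.head_induction_on generalizing t with
  | refl => exact absurd hs.symm (hv t)
  | head hstep hred ih =>
    subst hs
    generalize hr : t.rename (· + 1) = r at hstep
    cases hstep with
    | beta u _ =>
      -- The fresh variable `x = var 0` is consumed by an abstraction, as must happen at some point
      -- because `v` is not an application of a term without `x` to `x`.
      rcases t with _ | _ | w <;> cases hr
      change BetaRed ((w.rename (liftRen (· + 1))).subst0 (var 0)) v at hred
      rw [subst0_rename_liftRen_var_zero] at hred
      exact hred.abs
    | appL _ h =>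
      subst hr
      obtain ⟨t', rfl, ht⟩ := h.exists_of_rename
      exact (ih rfl).head ht
    | appR _ h => cases h

theorem betaRed_church_of_app_app_var {t : Lam} {n : ℕ}
    (h : BetaRed (app (app (t.rename (· + 2)) (var 1)) (var 0)) (iterApp (var 0) n (var 1))) :
    BetaRed t (church n) := by
  have hren : t.rename (· + 2) = (t.rename (· + 1)).rename (· + 1) := by
    simp only [rename_eq_subst, subst_subst, subst]
  rw [hren] at h
  have happ : BetaRed (app (t.rename (· + 1)) (var 0)) (abs (iterApp (var 0) n (var 1))) := by
    refine BetaRed.abs_of_app_var h fun t' ht' => ?_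
    rcases n with _ | n <;> rcases t' with _ | _ | _ <;> cases ht'
  exact happ.abs_of_app_var fun _ ht' => by cases ht'

/-! ### The storage machine -/

/-- A Gödel numbering of terms. -/
def code : Lam → ℕ
  | var i => Nat.pair 0 i
  | app u v => Nat.pair 1 (Nat.pair u.code v.code)
  | abs u => Nat.pair 2 u.code

theorem code_injective : Function.Injective code := by
  intro t t' h
  induction t generalizing t' with
  | var i => cases t' <;> simp_all [code]
  | app u v hu hv =>
    cases t' <;> simp only [code, Nat.pair_eq_pair] at h
    all_goals grind
  | abs u hu =>
    cases t' <;> simp only [code, Nat.pair_eq_pair] at h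
    all_goals grind

theorem closedUnder_of_code_lt {t : Lam} {k : ℕ} (h : t.code < k) : ClosedUnder k t := by
  induction t generalizing k with
  | var i => exact (Nat.right_le_pair 0 i).trans_lt h
  | app u v hu hv =>
    have huv : Nat.pair u.code v.code < k := (Nat.right_le_pair 1 _).trans_lt h
    exact ⟨hu ((Nat.left_le_pair _ _).trans_lt huv), hv ((Nat.right_le_pair _ _).trans_lt huv)⟩
  | abs u hu => exact hu (((Nat.right_le_pair 2 _).trans_lt h).trans (Nat.lt_succ_self k))

/-- The variable by which the storage machine denotes the integer `m` with base `a` and step `b`.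
It is larger than all free variables of `a` and `b`, so that the terms these variables stand for
can be defined by recursion, and it avoids the variables `f = var 0` and `ν = var 1`. -/
def closureVar (m : ℕ) (a b : Lam) : ℕ := Nat.pair m (Nat.pair a.code b.code) + 2

theorem closureVar_injective :
    Function.Injective fun p : ℕ × Lam × Lam => closureVar p.1 p.2.1 p.2.2 := by
  rintro ⟨m, a, b⟩ ⟨m', a', b'⟩ h
  obtain ⟨rfl, ha, hb⟩ : m = m' ∧ a.code = a'.code ∧ b.code = b'.code := by
    simpa only [closureVar, Nat.add_right_cancel_iff, Nat.pair_eq_pair] using h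
  rw [code_injective ha, code_injective hb]

theorem closedUnder_closureVar (m : ℕ) (a b : Lam) :
    ClosedUnder (closureVar m a b) a ∧ ClosedUnder (closureVar m a b) b := by
  have hab : Nat.pair a.code b.code < closureVar m a b :=
    (Nat.right_le_pair m _).trans_lt (Nat.lt_add_of_pos_right two_pos)
  exact ⟨closedUnder_of_code_lt ((Nat.left_le_pair _ _).trans_lt hab),
    closedUnder_of_code_lt ((Nat.right_le_pair _ _).trans_lt hab)⟩

/-- One step of the storage machine: a weak head step, or a step in which the generic integer
`ν = var 1`, standing for `n`, is frozen into a closure variable, or in which a closure variable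
unfolds. -/
inductive StoreStep (n : ℕ) : Lam → Lam → Prop
  | weak {s s'} : WeakStep s s' → StoreStep n s s'
  | freeze (a b c : Lam) :
      StoreStep n (app (app (app (var 1) a) b) c) (app (var (closureVar n a b)) c)
  | zero (a b c : Lam) : StoreStep n (app (var (closureVar 0 a b)) c) (app a c)
  | succ {m : ℕ} (hm : m < n) (a b c : Lam) :
      StoreStep n (app (var (closureVar (m + 1) a b)) c) (app (app b (var (closureVar m a b))) c)

/-- `σ` replaces the generic integer of the storage machine by `θ`, and each closure variable by
the corresponding instance of the unfolding `t` of `θ`. -/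
structure IsStoreSubst (θ : Lam) (t σ : ℕ → Lam) : Prop where
  zero : σ 0 = var 0
  one : σ 1 = θ
  closureVar (m : ℕ) (a b : Lam) :
    σ (closureVar m a b) = (t m).subst (scons (b.subst σ) (scons (a.subst σ) var))

theorem StoreStep.weakRed_subst {n : ℕ} {θ : Lam} {t σ : ℕ → Lam} (ht : IsUnfolding θ n t)
    (hσ : IsStoreSubst θ t σ) {s s' : Lam} (h : StoreStep n s s') :
    WeakRed (s.subst σ) (s'.subst σ) := by
  cases h with
  | weak h => exact .single (h.subst σ)
  | freeze a b c =>
    simp only [subst, hσ.one, hσ.closureVar]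
    exact (ht.app_app _ _).appL _
  | zero a b c =>
    simp only [subst, hσ.closureVar]
    exact (ht.zero.subst _).appL _
  | succ hm a b c =>
    simp only [subst, hσ.closureVar]
    exact ((ht.succ _ hm).subst _).appL _

theorem exists_isStoreSubst (θ : Lam) (t : ℕ → Lam) : ∃ σ, IsStoreSubst θ t σ := by
  obtain ⟨σ, hclosure, hother⟩ := exists_recursive_extend closureVar_injective
    (F := fun p σ => (t p.1).subst (scons (p.2.2.subst σ) (scons (p.2.1.subst σ) var)))
    (fun p σ σ' h => by
      rw [(closedUnder_closureVar p.1 p.2.1 p.2.2).1.subst_congr h,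
        (closedUnder_closureVar p.1 p.2.1 p.2.2).2.subst_congr h])
    (scons (var 0) fun _ => θ)
  refine ⟨σ, hother 0 ?_, hother 1 ?_, fun m a b => hclosure (m, a, b)⟩ <;>
    · rintro ⟨p, hp⟩
      simp [closureVar] at hp

end Lam

/-! ### Realizability -/

/-- A set of λ-terms closed under weak head expansion, the interpretation of a formula. -/
structure SatSet where
  carrier : Set Lam
  expand : ∀ {t t'}, Lam.WeakStep t t' → t' ∈ carrier → t ∈ carrier

namespace SatSet

instance : Membership Lam SatSet := ⟨fun X t => t ∈ X.carrier⟩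

/-- The realizers of an implication. -/
def imp (X Y : SatSet) : SatSet where
  carrier := {t | ∀ a ∈ X, .app t a ∈ Y}
  expand h ht a ha := Y.expand (.appL a h) (ht a ha)

/-- The realizers of a universal quantification. -/
def all {ι : Type*} (X : ι → SatSet) : SatSet where
  carrier := {t | ∀ i, t ∈ X i}
  expand h ht i := (X i).expand h (ht i)

end SatSet

/-- A first order structure on `D` for the signature `S`, with predicates valued in saturated sets
and an arbitrary saturated set for `⊥`. -/
structure RealizabilityModel (S : Sig) (D : Type*) where
  fn : (f : S.Fn) → (Fin (S.arFn f) → D) → D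
  pr : S.Pr → List D → SatSet
  bot : SatSet

namespace RealizabilityModel

variable {S : Sig} {D : Type*} (M : RealizabilityModel S D)

/-- The value of a first order term. -/
def eval (ρ : ℕ → D) : FOTerm S → D
  | .var i => ρ i
  | .fn f ts => M.fn f fun i => eval ρ (ts i)

/-- The set of realizers of a formula. Predicate variables range over all saturated-set valued
predicates. -/
def interp : (ℕ → D) → (ℕ → List D → SatSet) → Form S → SatSet
  | _, _, .bot => M.bot
  | ρ, _, .pr P ts => M.pr P (ts.map (M.eval ρ))
  | ρ, η, .pvar X ts => η X (ts.map (M.eval ρ))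
  | ρ, η, .arr A B => (interp ρ η A).imp (interp ρ η B)
  | ρ, η, .fall A => .all fun d => interp (scons d ρ) η A
  | ρ, η, .pall A => .all fun P => interp ρ (scons P η) A

theorem eval_subst (ρ : ℕ → D) (σ : ℕ → FOTerm S) (t : FOTerm S) :
    M.eval ρ (t.subst σ) = M.eval (fun i => M.eval ρ (σ i)) t := by
  induction t with
  | var i => rfl
  | fn f ts ih => simp only [FOTerm.subst, eval, ih]

theorem eval_rename (ρ : ℕ → D) (r : ℕ → ℕ) (t : FOTerm S) :
    M.eval ρ (t.rename r) = M.eval (fun i => ρ (r i)) t := by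
  induction t with
  | var i => rfl
  | fn f ts ih => simp only [FOTerm.rename, eval, ih]

theorem map_eval_map_subst (ρ : ℕ → D) (σ : ℕ → FOTerm S) (ts : List (FOTerm S)) :
    (ts.map (FOTerm.subst σ)).map (M.eval ρ) = ts.map (M.eval fun i => M.eval ρ (σ i)) := by
  simp only [List.map_map, Function.comp_def, eval_subst]

theorem interp_substFO (A : Form S) (ρ : ℕ → D) (η : ℕ → List D → SatSet) (σ : ℕ → FOTerm S) :
    M.interp ρ η (A.substFO σ) = M.interp (fun i => M.eval ρ (σ i)) η A := by
  induction A generalizing ρ η σ with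
  | bot => rfl
  | pr P ts => simp only [Form.substFO, interp, map_eval_map_subst]
  | pvar X ts => simp only [Form.substFO, interp, map_eval_map_subst]
  | arr A B hA hB => simp only [Form.substFO, interp, hA, hB]
  | pall A ih => simp only [Form.substFO, interp, ih]
  | fall A ih =>
    simp only [Form.substFO, interp, ih]
    congr! 3 with d
    exact funext (Nat.rec rfl fun i _ => M.eval_rename _ _ _)

theorem interp_substFO0 (A : Form S) (ρ : ℕ → D) (η : ℕ → List D → SatSet) (u : FOTerm S) :
    M.interp ρ η (A.substFO0 u) = M.interp (scons (M.eval ρ u) ρ) η A := by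
  rw [Form.substFO0, interp_substFO]
  congr 1
  exact funext (Nat.rec rfl fun _ _ => rfl)

theorem interp_shiftFO (A : Form S) (d : D) (ρ : ℕ → D) (η : ℕ → List D → SatSet) :
    M.interp (scons d ρ) η A.shiftFO = M.interp ρ η A :=
  M.interp_substFO A _ _ _

theorem interp_rename2 (A : Form S) (ρ : ℕ → D) (η : ℕ → List D → SatSet) (r : ℕ → ℕ) :
    M.interp ρ η (A.rename2 r) = M.interp ρ (fun X => η (r X)) A := by
  induction A generalizing ρ η r with
  | bot => rfl
  | pr P ts => rfl
  | pvar X ts => rfl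
  | arr A B hA hB => simp only [Form.rename2, interp, hA, hB]
  | fall A ih => simp only [Form.rename2, interp, ih]
  | pall A ih =>
    simp only [Form.rename2, interp, ih]
    congr! 3 with P
    exact funext (Nat.rec rfl fun _ _ => rfl)

/-- The predicate defined by a formula `G` whose first order variables `0, …, k - 1` are the
arguments and whose remaining ones are read in `ρ`, `d` places further. -/
def comprehension (G : Form S) (ρ : ℕ → D) (η : ℕ → List D → SatSet) (d : ℕ) (args : List D) :
    SatSet :=
  M.interp (fun i => if h : i < args.length then args[i] else ρ (i - args.length + d)) η G

end RealizabilityModel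

/-- The environment obtained from `ρ` by inserting `a` at position `e`. -/
def insertEnv {α : Type*} (a : α) : ℕ → (ℕ → α) → ℕ → α
  | 0, ρ => scons a ρ
  | e + 1, ρ => scons (ρ 0) (insertEnv a e fun i => ρ (i + 1))

theorem insertEnv_apply {α : Type*} (a : α) (e : ℕ) (ρ : ℕ → α) (i : ℕ) :
    insertEnv a e ρ i = if i = e then a else ρ (if e < i then i - 1 else i) := by
  induction e generalizing ρ i with
  | zero => cases i <;> rfl
  | succ e ih =>
    cases i with
    | zero => rfl
    | succ i =>
      rw [insertEnv, scons, ih]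
      congr! 1
      · simp
      · congr 1; grind

namespace RealizabilityModel

variable {S : Sig} {D : Type*} (M : RealizabilityModel S D)

theorem interp_inst2 (G A : Form S) (d e : ℕ) (ρ : ℕ → D) (η : ℕ → List D → SatSet) :
    M.interp ρ η (Form.inst2 G d e A) =
      M.interp ρ (insertEnv (M.comprehension G ρ (fun X => η (X + e)) d) e η) A := by
  induction A generalizing d e ρ η with
  | bot => rfl
  | pr P ts => rfl
  | arr A B hA hB => simp only [Form.inst2, interp, hA, hB]
  | fall A ih => simp only [Form.inst2, interp, ih]; rfl
  | pall A ih => simp only [Form.inst2, interp, ih]; rfl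
  | pvar X ts =>
    simp only [Form.inst2, interp, insertEnv_apply]
    split_ifs with hX hlt
    · rw [interp_substFO, interp_rename2, comprehension]
      congr 1
      funext i
      simp only [List.length_map]
      split_ifs with hi
      · simp
      · rfl
    · rfl
    · rfl

theorem interp_inst2_0 (A G : Form S) (ρ : ℕ → D) (η : ℕ → List D → SatSet) :
    M.interp ρ η (A.inst2_0 G) = M.interp ρ (scons (M.comprehension G ρ η 0) η) A :=
  M.interp_inst2 G A 0 0 ρ η

/-- The equations of `E` hold in the model. -/
def Satisfies (E : Set (FOTerm S × FOTerm S)) : Prop :=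
  ∀ p ∈ E, ∀ ρ, M.eval ρ p.1 = M.eval ρ p.2

variable {M} {E : Set (FOTerm S × FOTerm S)}

theorem Satisfies.eval_eq (hM : M.Satisfies E) {u v : FOTerm S} (h : EqE E u v) (ρ : ℕ → D) :
    M.eval ρ u = M.eval ρ v := by
  induction h with
  | rel u v h =>
    obtain ⟨p, hp, σ, rfl, rfl⟩ := h
    rw [eval_subst, eval_subst, hM p hp]
  | refl _ => rfl
  | symm _ _ _ ih => exact ih.symm
  | trans _ _ _ _ _ ih₁ ih₂ => exact ih₁.trans ih₂

variable (M) in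
/-- The substitution `σ` maps the variables declared in the context `Γ` to realizers of their
types. -/
def RealizesCtx (ρ : ℕ → D) (η : ℕ → List D → SatSet) (σ : ℕ → Lam) (Γ : List (Form S)) : Prop :=
  ∀ i A, Γ[i]? = some A → σ i ∈ M.interp ρ η A

theorem RealizesCtx.cons {ρ : ℕ → D} {η : ℕ → List D → SatSet} {σ : ℕ → Lam}
    {Γ : List (Form S)} (hΓ : M.RealizesCtx ρ η σ Γ) {a : Lam} {A : Form S}
    (ha : a ∈ M.interp ρ η A) : M.RealizesCtx ρ η (scons a σ) (A :: Γ)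
  | 0, _, rfl => ha
  | i + 1, B, hB => hΓ i B hB

theorem RealizesCtx.map {ρ ρ' : ℕ → D} {η η' : ℕ → List D → SatSet} {σ : ℕ → Lam}
    {Γ : List (Form S)} (hΓ : M.RealizesCtx ρ η σ Γ) {f : Form S → Form S}
    (hf : ∀ A, M.interp ρ' η' (f A) = M.interp ρ η A) : M.RealizesCtx ρ' η' σ (Γ.map f) := by
  intro i A hA
  rw [List.getElem?_map, Option.map_eq_some_iff] at hA
  obtain ⟨B, hB, rfl⟩ := hA
  rw [hf]
  exact hΓ i B hB

end RealizabilityModel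

namespace AF2

variable {S : Sig} {E : Set (FOTerm S × FOTerm S)} {Γ : List (Form S)} {t : Lam} {A : Form S}

theorem closedUnder (h : AF2 S E Γ t A) : Lam.ClosedUnder Γ.length t := by
  induction h with
  | var h => exact (List.getElem?_eq_some_iff.1 h).1
  | absI _ ih => exact ih
  | appE _ _ hu hv => exact ⟨hu, hv⟩
  | fallI _ ih => rwa [List.length_map] at ih
  | fallE _ _ ih => exact ih
  | pallI _ ih => rwa [List.length_map] at ih
  | pallE _ _ ih => exact ih
  | eqE _ _ ih => exact ih

theorem subst_mem_interp {D : Type*} {M : RealizabilityModel S D} (hM : M.Satisfies E)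
    (h : AF2 S E Γ t A) {ρ : ℕ → D} {η : ℕ → List D → SatSet} {σ : ℕ → Lam}
    (hσ : M.RealizesCtx ρ η σ Γ) : t.subst σ ∈ M.interp ρ η A := by
  induction h generalizing ρ η σ with
  | var h => exact hσ _ _ h
  | absI _ ih =>
    intro a ha
    refine SatSet.expand _ (.beta _ a) ?_
    rw [Lam.subst0_subst_liftSub]
    exact ih (hσ.cons ha)
  | appE _ _ hu hv => exact hu hσ _ (hv hσ)
  | fallI _ ih => exact fun d => ih (hσ.map fun B => M.interp_shiftFO B d ρ η)
  | fallE u _ ih => rw [M.interp_substFO0]; exact ih hσ _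
  | pallI _ ih => exact fun P => ih (hσ.map fun B => M.interp_rename2 B ρ (scons P η) _)
  | pallE G _ ih => rw [M.interp_inst2_0]; exact ih hσ _
  | eqE _ huv ih =>
    rw [M.interp_substFO0, ← hM.eval_eq huv, ← M.interp_substFO0]
    exact ih hσ

end AF2

/-! ### The standard model of arithmetic -/

/-- The realizability model on `ℕ`, in which `⊥` is interpreted by `B`. -/
def natModel (B : SatSet) : RealizabilityModel NatSig ℕ where
  fn
    | .zero, _ => 0
    | .succ, k => k (0 : Fin 1) + 1
  pr P := P.elim
  bot := B

theorem subst_numT (B : SatSet) (ρ : ℕ → ℕ) (t : FOTerm NatSig) :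
    t.subst (fun i => numT (ρ i)) = numT ((natModel B).eval ρ t) := by
  induction t with
  | var i => rfl
  | fn f ts ih =>
    rw [FOTerm.subst]
    cases f with
    | zero => exact congrArg _ (funext fun i => i.elim0)
    | succ => exact congrArg _ (funext fun i : Fin 1 => Subsingleton.elim 0 i ▸ ih (0 : Fin 1))

theorem Adequate.numT_inj {E : Set (FOTerm NatSig × FOTerm NatSig)} (hE : Adequate E) {a b : ℕ}
    (h : EqE E (numT a) (numT b)) : a = b := by
  induction a generalizing b with
  | zero =>
    cases b with
    | zero => rfl
    | succ b => exact absurd h.symm (hE.1 _)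
  | succ a ih =>
    cases b with
    | zero => exact absurd h (hE.1 _)
    | succ b => rw [ih (hE.2 _ _ h)]

theorem Adequate.natModel_satisfies {E : Set (FOTerm NatSig × FOTerm NatSig)} (hE : Adequate E)
    (B : SatSet) : (natModel B).Satisfies E := by
  intro p hp ρ
  apply hE.numT_inj
  rw [← subst_numT, ← subst_numT]
  exact .rel _ _ ⟨p, hp, _, rfl, rfl⟩

section Realizers

open Lam

variable {ρ : ℕ → ℕ} {η : ℕ → List ℕ → SatSet} {u : FOTerm NatSig}

theorem betaRed_church_of_mem_NForm {B : SatSet} {τ : Lam}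
    (hτ : τ ∈ (natModel B).interp ρ η (NForm u)) :
    BetaRed τ (church ((natModel B).eval ρ u)) := by
  -- Test `τ` on fresh variables `x = var N` and `f = var (N + 1)`, with the predicate on `m` of
  -- reducing to `(f)ᵐx`. The substitution `σ` brings `x` and `f` to the places they have in the
  -- body of a Church integer.
  let N := τ.code + 1
  let σ : ℕ → Lam := fun i => if i = N then var 1 else if i = N + 1 then var 0 else var (i + 2)
  have hσx : σ N = var 1 := if_pos rfl
  have hσf : σ (N + 1) = var 0 := by simp [σ]
  have hστ : τ.subst σ = τ.rename (· + 2) := by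
    rw [rename_eq_subst]
    refine (closedUnder_of_code_lt τ.code.lt_succ_self).subst_congr fun i hi => ?_
    rw [show σ i = _ from if_neg hi.ne, if_neg (hi.trans N.lt_succ_self).ne]
  let P : List ℕ → SatSet := fun l =>
    { carrier := {t | BetaRed (t.subst σ) (iterApp (var 0) (l.headD 0) (var 1))}
      expand := fun h ht => .head (h.to_beta.subst σ) ht }
  have hx : var N ∈ P [0] := by
    change BetaRed (σ N) (var 1)
    rw [hσx]
  have hf (m : ℕ) (a : Lam) (ha : a ∈ P [m]) : app (var (N + 1)) a ∈ P [m + 1] :=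
    BetaRed.app (hσf ▸ .refl) ha
  have key : BetaRed ((app (app τ (var N)) (var (N + 1))).subst σ) _ :=
    hτ P (var N) hx (var (N + 1)) hf
  simp only [subst, hστ, hσx, hσf] at key
  exact betaRed_church_of_app_app_var key

/-- The interpretation of `⊥`: the terms that the storage machine for `n` brings to some `(f)τ`
with `τ` reducing to `n̲`. -/
def storePole (n : ℕ) : SatSet where
  carrier := {t | ∃ τ, ReflTransGen (StoreStep n) t (app (var 0) τ) ∧ BetaRed τ (church n)}
  expand h := fun ⟨τ, ht, hτ⟩ => ⟨τ, ht.head (.weak h), hτ⟩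

theorem mem_storePole_of_storeStep {n : ℕ} {t t' : Lam} (h : StoreStep n t t')
    (ht' : t' ∈ storePole n) : t ∈ storePole n :=
  let ⟨τ, ht, hτ⟩ := ht'
  ⟨τ, ht.head h, hτ⟩

theorem var_zero_mem_neg_NForm {n : ℕ} (hu : (natModel (storePole n)).eval ρ u = n) :
    var 0 ∈ (natModel (storePole n)).interp ρ η (.neg (NForm u)) :=
  fun τ hτ => ⟨τ, .refl, hu ▸ betaRed_church_of_mem_NForm hτ⟩

theorem var_one_mem_godel_NForm {n : ℕ} (hu : (natModel (storePole n)).eval ρ u = n) :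
    var 1 ∈ (natModel (storePole n)).interp ρ η (NForm u).godel := by
  intro P a ha b hb c hc
  have key (m : ℕ) (hm : m ≤ n) (c : Lam) (hc : c ∈ P [m]) :
      app (var (closureVar m a b)) c ∈ storePole n := by
    induction m generalizing c with
    | zero => exact mem_storePole_of_storeStep (.zero a b c) (ha c hc)
    | succ m ih =>
      exact mem_storePole_of_storeStep (.succ hm a b c) (hb m _ (ih (Nat.le_of_succ_le hm)) c hc)
  exact mem_storePole_of_storeStep (.freeze a b c) (key n le_rfl c (hu ▸ hc))

end Realizers

open Lam in
/-- Krivine's storage theorem : every λ-term of type `∀x{N^g[x] → ¬¬N[x]}`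
in AF2 is a storage operator for Church integers. -/
theorem stmt12 (E : Set (FOTerm NatSig × FOTerm NatSig)) (hE : Adequate E)
    (T : Lam) (h : AF2 NatSig E [] T storType) :
    ∀ n : ℕ, IsStorageFor T (church n) := by
  intro n
  have hT : Closed T := h.closedUnder
  obtain ⟨τ, hrun, hτ⟩ := h.subst_mem_interp (hE.natModel_satisfies (storePole n))
    (ρ := fun _ => 0) (η := fun _ _ => storePole n) (σ := var) (fun _ _ h => nomatch h) n
    (var 1) (var_one_mem_godel_NForm rfl) (var 0) (var_zero_mem_neg_NForm rfl)
  refine ⟨hT, τ, EqvGen.reflTransGen_le_eqvGen _ _ _ hτ, fun θ hθ => ?_⟩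
  obtain ⟨t, ht⟩ := hθ.exists_isUnfolding
  obtain ⟨σ, hσ⟩ := exists_isStoreSubst θ t
  have hred : WeakRed ((app (app (T.subst var) (var 1)) (var 0)).subst σ) _ :=
    hrun.lift' (Lam.subst σ) fun _ _ => StoreStep.weakRed_subst ht hσ
  simp only [subst, hσ.zero, hσ.one, hT.subst_eq] at hred
  exact ⟨σ, hσ.zero, WeakRed.to_headRed hred⟩
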